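/- arXiv:1705.00474 — 2 statements merged into one kernel-verified Lean document; each statement's English description precedes it below -/
import Mathlib

section
/- Corollary of Lemma 1: For any weights w_k ≥ 0, the supremum of the weighted secrecy objective Σ_{k∈K} w_k · max(f_k(R, Ω + Φ), 0) over all feasible triples (R, Ω, Φ) equals its supremum over the feasible triples with Φ = 0. -/
open Matrix BigOperators Finset ComplexOrder

noncomputable def logDet {p : Type*} [Fintype p] [DecidableEq p] (M : Matrix p p ℂ) : ℝ :=
  Real.log M.det.re

def blk {I : Type*} {n : I → ℕ} (M : Matrix (Σ i, Fin (n i)) (Σ i, Fin (n i)) ℂ) (i : I) :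
    Matrix (Fin (n i)) (Fin (n i)) ℂ :=
  M.submatrix (fun a => ⟨i, a⟩) (fun a => ⟨i, a⟩)

def psub {I : Type*} [DecidableEq I] {n : I → ℕ}
    (M : Matrix (Σ i, Fin (n i)) (Σ i, Fin (n i)) ℂ) (S : Finset I) :
    Matrix {j : Σ i, Fin (n i) // j.1 ∈ S} {j : Σ i, Fin (n i) // j.1 ∈ S} ℂ :=
  M.submatrix Subtype.val Subtype.val

def IsBlockDiag {I : Type*} {n : I → ℕ}
    (M : Matrix (Σ i, Fin (n i)) (Σ i, Fin (n i)) ℂ) : Prop :=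
  ∀ a b : Σ i, Fin (n i), a.1 ≠ b.1 → M a b = 0

noncomputable def gS {I : Type*} [Fintype I] [DecidableEq I] {n : I → ℕ} (S : Finset I)
    (R Ω : Matrix (Σ i, Fin (n i)) (Σ i, Fin (n i)) ℂ) : ℝ :=
  (∑ i ∈ S, logDet (blk (R + Ω) i)) - logDet (psub Ω S)

noncomputable def phi {p : Type*} [Fintype p] [DecidableEq p] (A B : Matrix p p ℂ) : ℝ :=
  logDet (A + B) - logDet B

noncomputable def fk {I : Type*} [Fintype I] [DecidableEq I] {n : I → ℕ}
    {K : Type*} [Fintype K] [DecidableEq K] {m e : K → ℕ}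
    (H : ∀ k : K, Matrix (Fin (m k)) (Σ i, Fin (n i)) ℂ)
    (G : ∀ k : K, Matrix (Fin (e k)) (Σ i, Fin (n i)) ℂ)
    (Sig : ∀ k : K, Matrix (Fin (m k)) (Fin (m k)) ℂ)
    (Z : ∀ k : K, Matrix (Fin (e k)) (Fin (e k)) ℂ)
    (k : K) (R : K → Matrix (Σ i, Fin (n i)) (Σ i, Fin (n i)) ℂ)
    (Θ : Matrix (Σ i, Fin (n i)) (Σ i, Fin (n i)) ℂ) : ℝ :=
  phi (H k * R k * (H k)ᴴ)
      ((∑ l ∈ Finset.univ.erase k, H k * R l * (H k)ᴴ) + H k * Θ * (H k)ᴴ + Sig k)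
  - phi (G k * R k * (G k)ᴴ)
      ((∑ l ∈ Finset.univ.erase k, G k * R l * (G k)ᴴ) + G k * Θ * (G k)ᴴ + Z k)

def Feasible {I : Type*} [Fintype I] [DecidableEq I] {n : I → ℕ}
    {K : Type*} [Fintype K] (C P : I → ℝ)
    (R : K → Matrix (Σ i, Fin (n i)) (Σ i, Fin (n i)) ℂ)
    (Ω Φ : Matrix (Σ i, Fin (n i)) (Σ i, Fin (n i)) ℂ) : Prop :=
  (∀ k, (R k).PosSemidef) ∧ Ω.PosDef ∧ Φ.PosSemidef ∧ IsBlockDiag Φ ∧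
  (∀ S : Finset I, S.Nonempty → gS S (∑ k, R k) Ω ≤ ∑ i ∈ S, C i) ∧
  (∀ i : I, ((blk (∑ k, R k) i).trace).re + ((blk Ω i).trace).re + ((blk Φ i).trace).re ≤ P i)

/-!
Moving the artificial noise `Φ` into the quantization noise `Ω` leaves the objective and the power
constraints unchanged, so it suffices that it does not increase `gS`. The decrease of `gS S R` from
`Ω` to `Ω + Φ` is `phi Φ_S Ω_S - ∑ i ∈ S, phi Φ_ii (R + Ω)_ii`. Adding the diagonal blocks of `Φ`
to `Ω_S` one at a time, the chain rule splits `phi Φ_S Ω_S` into one gain per block, and each of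
these is at least `phi Φ_ii (R + Ω)_ii`: when block `i` is added, block `i` of the noise is still
`Ω_ii ≤ (R + Ω)_ii`, and for an isometry `E`, `Eᴴ * A * E ≤ B` implies `B⁻¹ ≤ Eᴴ * A⁻¹ * E`.
-/

section LoewnerOrder

open scoped MatrixOrder

variable {𝕜 p q : Type*} [RCLike 𝕜] [Fintype p]

lemma det_one_add_eq_prod_eigenvalues [DecidableEq p] {M : Matrix p p 𝕜} (hM : M.IsHermitian) :
    (1 + M).det = ∏ i, (1 + (hM.eigenvalues i : 𝕜)) := by
  have hdiag : 1 + M = Unitary.conjStarAlgAut 𝕜 _ hM.eigenvectorUnitary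
      (diagonal fun i => 1 + (hM.eigenvalues i : 𝕜)) := by
    conv_lhs => rw [hM.spectral_theorem]
    rw [← map_one (Unitary.conjStarAlgAut 𝕜 _ hM.eigenvectorUnitary), ← map_add, ← diagonal_one,
      diagonal_add]
    rfl
  rw [hdiag, Unitary.conjStarAlgAut_apply, det_mul_right_comm, Unitary.mul_star_self_of_mem
    hM.eigenvectorUnitary.prop, one_mul, det_diagonal]

lemma one_le_det_one_add [DecidableEq p] {M : Matrix p p 𝕜} (hM : M.PosSemidef) :
    1 ≤ (1 + M).det := by
  rw [det_one_add_eq_prod_eigenvalues hM.isHermitian]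
  refine Finset.one_le_prod fun i _ => le_add_of_nonneg_right ?_
  exact RCLike.ofReal_nonneg.mpr (hM.eigenvalues_nonneg i)

lemma det_le_det_of_le [DecidableEq p] {A B : Matrix p p 𝕜} (hA : A.PosSemidef)
    (hAB : A ≤ B) : A.det ≤ B.det := by
  obtain hdet | hdet := eq_or_ne A.det 0
  · have hB : B.PosSemidef := nonneg_iff_posSemidef.mp (hA.nonneg.trans hAB)
    exact hdet ▸ hB.det_nonneg
  · have hApos : A.PosDef := hA.posDef_iff_det_ne_zero.mpr hdet
    obtain ⟨L, hL⟩ := CStarAlgebra.nonneg_iff_eq_star_mul_self.mp (sub_nonneg.mpr hAB)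
    calc A.det ≤ A.det * (1 + L * A⁻¹ * Lᴴ).det :=
          le_mul_of_one_le_right hApos.det_pos.le
            (one_le_det_one_add (hApos.inv.posSemidef.mul_mul_conjTranspose_same L))
      _ = (A + Lᴴ * L).det := (det_add_mul _ _ hApos.det_pos.ne'.isUnit).symm
      _ = B.det := by rw [← star_eq_conjTranspose, ← hL, add_sub_cancel]

variable [DecidableEq q] {A : Matrix p p 𝕜} {B : Matrix q q 𝕜} {E : Matrix p q 𝕜}

lemma posDef_of_compression_le [Finite q] (hA : A.PosDef) (hE : Eᴴ * E = 1)
    (hAB : Eᴴ * A * E ≤ B) : B.PosDef := by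
  have := Fintype.ofFinite q
  have hinj : Function.Injective E.mulVec := fun x y hxy => by
    simpa only [mulVec_mulVec, hE, one_mulVec] using congrArg (Eᴴ *ᵥ ·) hxy
  have h := (hA.conjTranspose_mul_mul_same hinj).add_posSemidef (le_iff.mp hAB)
  rwa [add_sub_cancel] at h

lemma inv_le_compression_inv_of_compression_le [DecidableEq p] [Fintype q] (hA : A.PosDef)
    (hE : Eᴴ * E = 1) (hAB : Eᴴ * A * E ≤ B) : B⁻¹ ≤ Eᴴ * A⁻¹ * E := by
  have hB : B.PosDef := posDef_of_compression_le hA hE hAB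
  have hAAinv : A * A⁻¹ = 1 := mul_nonsing_inv _ hA.det_pos.ne'.isUnit
  have hAinvA : A⁻¹ * A = 1 := nonsing_inv_mul _ hA.det_pos.ne'.isUnit
  have hBinvB : B⁻¹ * B = 1 := nonsing_inv_mul _ hB.det_pos.ne'.isUnit
  have hsquare : Eᴴ * A⁻¹ * E - B⁻¹ =
      (A⁻¹ * E - E * B⁻¹)ᴴ * A * (A⁻¹ * E - E * B⁻¹) + (B⁻¹)ᴴ * (B - Eᴴ * A * E) * B⁻¹ := by
    rw [conjTranspose_sub, conjTranspose_mul, conjTranspose_mul, hA.inv.isHermitian.eq,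
      hB.inv.isHermitian.eq]
    calc Eᴴ * A⁻¹ * E - B⁻¹
        = Eᴴ * (A⁻¹ * A) * A⁻¹ * E - Eᴴ * (A⁻¹ * A) * E * B⁻¹ - B⁻¹ * Eᴴ * (A * A⁻¹) * E
            + B⁻¹ * B * B⁻¹ := by
          simp only [hAAinv, hAinvA, hBinvB, Matrix.mul_one, Matrix.one_mul, Matrix.mul_assoc, hE]
          abel
      _ = _ := by
          simp only [Matrix.sub_mul, Matrix.mul_sub, Matrix.mul_assoc]
          abel
  rw [le_iff, hsquare]
  exact (hA.posSemidef.conjTranspose_mul_mul_same _).add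
    ((le_iff.mp hAB).conjTranspose_mul_mul_same _)

end LoewnerOrder

section LogDet

open scoped MatrixOrder

variable {p q : Type*} [Fintype p] [DecidableEq p] [Fintype q] [DecidableEq q]

lemma logDet_le_logDet_of_le {A B : Matrix p p ℂ} (hA : A.PosDef) (hAB : A ≤ B) :
    logDet A ≤ logDet B :=
  Real.log_le_log (Complex.pos_iff.mp hA.det_pos).1
    (Complex.le_def.mp (det_le_det_of_le hA.posSemidef hAB)).1

lemma logDet_add_mul_conjTranspose {A : Matrix p p ℂ} (hA : A.PosDef) (U : Matrix p q ℂ) :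
    logDet (A + U * Uᴴ) = logDet A + logDet (1 + Uᴴ * A⁻¹ * U) := by
  have hG : (1 + Uᴴ * A⁻¹ * U).PosDef :=
    PosDef.one.add_posSemidef (hA.inv.posSemidef.conjTranspose_mul_mul_same U)
  obtain ⟨hAre, hAim⟩ := Complex.pos_iff.mp hA.det_pos
  obtain ⟨hGre, -⟩ := Complex.pos_iff.mp hG.det_pos
  rw [logDet, det_add_mul _ _ hA.det_pos.ne'.isUnit, Complex.mul_re, ← hAim, zero_mul, sub_zero,
    Real.log_mul hAre.ne' hGre.ne', logDet, logDet]

lemma phi_mul_conjTranspose {A : Matrix p p ℂ} (hA : A.PosDef) (U : Matrix p q ℂ) :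
    phi (U * Uᴴ) A = logDet (1 + Uᴴ * A⁻¹ * U) := by
  rw [phi, add_comm, logDet_add_mul_conjTranspose hA, add_sub_cancel_left]

lemma phi_add (F F' A : Matrix p p ℂ) : phi (F + F') A = phi F (F' + A) + phi F' A := by
  simp only [phi, add_assoc]
  ring

lemma phi_le_phi_of_compression_le {A : Matrix p p ℂ} {B F : Matrix q q ℂ}
    {E : Matrix p q ℂ} (hA : A.PosDef) (hE : Eᴴ * E = 1) (hAB : Eᴴ * A * E ≤ B)
    (hF : F.PosSemidef) : phi F B ≤ phi (E * F * Eᴴ) A := by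
  have hB : B.PosDef := posDef_of_compression_le hA hE hAB
  obtain ⟨L, hL⟩ := CStarAlgebra.nonneg_iff_eq_mul_star_self.mp hF.nonneg
  rw [star_eq_conjTranspose] at hL
  have hEF : E * F * Eᴴ = (E * L) * (E * L)ᴴ := by
    simp only [hL, conjTranspose_mul, Matrix.mul_assoc]
  rw [hEF, hL, phi_mul_conjTranspose hB, phi_mul_conjTranspose hA]
  refine logDet_le_logDet_of_le
    (PosDef.one.add_posSemidef (hB.inv.posSemidef.conjTranspose_mul_mul_same L)) ?_
  have hinv : B⁻¹ ≤ Eᴴ * A⁻¹ * E := inv_le_compression_inv_of_compression_le hA hE hAB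
  have hconj := star_left_conjugate_le_conjugate hinv L
  simpa only [star_eq_conjTranspose, conjTranspose_mul, Matrix.mul_assoc, add_le_add_iff_left]
    using hconj

lemma sum_phi_le_phi_sum {ι : Type*} {r : ι → Type*} [∀ i, Fintype (r i)]
    [∀ i, DecidableEq (r i)] {A : Matrix p p ℂ} {B F : ∀ i, Matrix (r i) (r i) ℂ}
    {E : ∀ i, Matrix p (r i) ℂ} {T : Finset ι} (hA : A.PosDef)
    (hE : ∀ i ∈ T, (E i)ᴴ * E i = 1)
    (horth : (T : Set ι).Pairwise fun i j => (E i)ᴴ * E j = 0)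
    (hAB : ∀ i ∈ T, (E i)ᴴ * A * E i ≤ B i) (hF : ∀ i ∈ T, (F i).PosSemidef) :
    ∑ i ∈ T, phi (F i) (B i) ≤ phi (∑ i ∈ T, E i * F i * (E i)ᴴ) A := by
  classical
  induction T using Finset.induction_on with
  | empty => simp [phi]
  | insert i T hi ih =>
    have hiT : i ∈ insert i T := mem_insert_self i T
    have hTsub : T ⊆ insert i T := subset_insert i T
    have hsum : (∑ j ∈ T, E j * F j * (E j)ᴴ).PosSemidef :=
      posSemidef_sum _ fun j hj => (hF j (hTsub hj)).mul_mul_conjTranspose_same (E j)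
    have hcompress : (E i)ᴴ * ((∑ j ∈ T, E j * F j * (E j)ᴴ) + A) * E i = (E i)ᴴ * A * E i := by
      rw [Matrix.mul_add, Matrix.add_mul, Matrix.mul_sum, Matrix.sum_mul, add_eq_right]
      refine Finset.sum_eq_zero fun j hj => ?_
      rw [← Matrix.mul_assoc, ← Matrix.mul_assoc,
        horth hiT (hTsub hj) (ne_of_mem_of_not_mem hj hi).symm]
      simp only [Matrix.zero_mul]
    rw [Finset.sum_insert hi, Finset.sum_insert hi, phi_add]
    refine add_le_add ?_ (ih (fun j hj => hE j (hTsub hj))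
      (horth.mono (Finset.coe_subset.mpr hTsub)) (fun j hj => hAB j (hTsub hj))
      (fun j hj => hF j (hTsub hj)))
    exact phi_le_phi_of_compression_le (hA.posSemidef_add hsum) (hE i hiT)
      (hcompress.trans_le (hAB i hiT)) (hF i hiT)

end LogDet

section Fronthaul

variable {I : Type*} [DecidableEq I] {n : I → ℕ}

/-- The `0`-`1` matrix of the inclusion of block `i` into the blocks indexed by `S`; compression by
it extracts block `i` from a principal submatrix. It is defined for every `i`, and is zero when
`i ∉ S`. -/
def blkIncl (n : I → ℕ) (S : Finset I) (i : I) :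
    Matrix {j : Σ i, Fin (n i) // j.1 ∈ S} (Fin (n i)) ℂ :=
  (1 : Matrix (Σ i, Fin (n i)) (Σ i, Fin (n i)) ℂ).submatrix Subtype.val fun a => ⟨i, a⟩

lemma blkIncl_apply (S : Finset I) (i : I) (j : {j : Σ i, Fin (n i) // j.1 ∈ S})
    (a : Fin (n i)) : blkIncl n S i j a = if j.1 = ⟨i, a⟩ then 1 else 0 := rfl

variable {R Ω Φ : Matrix (Σ i, Fin (n i)) (Σ i, Fin (n i)) ℂ}

lemma IsBlockDiag.psub_eq_sum (hΦ : IsBlockDiag Φ) (S : Finset I) :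
    psub Φ S = ∑ i ∈ S, blkIncl n S i * blk Φ i * (blkIncl n S i)ᴴ := by
  ext ⟨⟨i, a⟩, hi⟩ ⟨⟨i', b⟩, hi'⟩
  rw [Matrix.sum_apply, Finset.sum_eq_single i]
  · by_cases hne : i = i'
    · subst hne
      simp [psub, blk, mul_apply, blkIncl_apply]
    · simp [psub, mul_apply, blkIncl_apply, Ne.symm hne, hΦ ⟨i, a⟩ ⟨i', b⟩ hne]
  · intro l _ hl
    simp [mul_apply, blkIncl_apply, hl.symm]
  · exact fun h => absurd hi h

variable [Fintype I] {S : Finset I} {i : I}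

lemma conjTranspose_blkIncl_mul_apply {r : Type*} (hi : i ∈ S)
    (M : Matrix {j : Σ i, Fin (n i) // j.1 ∈ S} r ℂ) (a : Fin (n i)) (c : r) :
    ((blkIncl n S i)ᴴ * M) a c = M ⟨⟨i, a⟩, hi⟩ c := by
  rw [mul_apply, Finset.sum_eq_single ⟨⟨i, a⟩, hi⟩]
  · simp [blkIncl_apply]
  · intro j _ hj
    simp [blkIncl_apply, mt Subtype.ext hj]
  · simp

lemma mul_blkIncl_apply {r : Type*} (hi : i ∈ S)
    (M : Matrix r {j : Σ i, Fin (n i) // j.1 ∈ S} ℂ) (c : r) (a : Fin (n i)) :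
    (M * blkIncl n S i) c a = M c ⟨⟨i, a⟩, hi⟩ := by
  have h := conjTranspose_blkIncl_mul_apply hi Mᴴ a c
  rwa [← conjTranspose_mul, conjTranspose_apply, conjTranspose_apply, star_inj] at h

lemma conjTranspose_blkIncl_mul_self (hi : i ∈ S) : (blkIncl n S i)ᴴ * blkIncl n S i = 1 := by
  ext a b
  simp [conjTranspose_blkIncl_mul_apply hi, blkIncl_apply, one_apply]

lemma conjTranspose_blkIncl_mul_of_ne {i' : I} (hi : i ∈ S) (hne : i ≠ i') :
    (blkIncl n S i)ᴴ * blkIncl n S i' = 0 := by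
  ext a b
  simp [conjTranspose_blkIncl_mul_apply hi, blkIncl_apply, hne]

lemma conjTranspose_blkIncl_mul_psub_mul (hi : i ∈ S)
    (M : Matrix (Σ i, Fin (n i)) (Σ i, Fin (n i)) ℂ) :
    (blkIncl n S i)ᴴ * psub M S * blkIncl n S i = blk M i := by
  ext a b
  rw [mul_blkIncl_apply hi, conjTranspose_blkIncl_mul_apply hi]
  rfl

lemma gS_eq_gS_add_phi_sub_sum_phi (S : Finset I)
    (R Ω Φ : Matrix (Σ i, Fin (n i)) (Σ i, Fin (n i)) ℂ) :
    gS S R Ω = gS S R (Ω + Φ) +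
      (phi (psub Φ S) (psub Ω S) - ∑ i ∈ S, phi (blk Φ i) (blk (R + Ω) i)) := by
  have hblk (i : I) : blk Φ i + blk (R + Ω) i = blk (R + (Ω + Φ)) i := by
    rw [← add_assoc, add_comm (R + Ω)]
    rfl
  have hpsub : psub Φ S + psub Ω S = psub (Ω + Φ) S := by
    rw [add_comm Ω]
    rfl
  simp only [gS, phi, hblk, hpsub, Finset.sum_sub_distrib]
  ring

open scoped MatrixOrder in
lemma sum_phi_blk_le_phi_psub (hR : R.PosSemidef) (hΩ : Ω.PosDef) (hΦ : Φ.PosSemidef)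
    (hdiag : IsBlockDiag Φ) (S : Finset I) :
    ∑ i ∈ S, phi (blk Φ i) (blk (R + Ω) i) ≤ phi (psub Φ S) (psub Ω S) := by
  rw [hdiag.psub_eq_sum S]
  refine sum_phi_le_phi_sum (hΩ.submatrix Subtype.val_injective)
    (fun i hi => conjTranspose_blkIncl_mul_self hi)
    (fun i hi i' _ hne => conjTranspose_blkIncl_mul_of_ne hi hne)
    (fun i hi => ?_) (fun i _ => hΦ.submatrix _)
  calc (blkIncl n S i)ᴴ * psub Ω S * blkIncl n S i = blk Ω i :=
        conjTranspose_blkIncl_mul_psub_mul hi Ω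
    _ ≤ blk R i + blk Ω i := le_add_of_nonneg_left (hR.submatrix _).nonneg

lemma gS_add_le (hR : R.PosSemidef) (hΩ : Ω.PosDef) (hΦ : Φ.PosSemidef)
    (hdiag : IsBlockDiag Φ) (S : Finset I) : gS S R (Ω + Φ) ≤ gS S R Ω := by
  rw [gS_eq_gS_add_phi_sub_sum_phi S R Ω Φ]
  exact le_add_of_nonneg_right (sub_nonneg.mpr (sum_phi_blk_le_phi_psub hR hΩ hΦ hdiag S))

lemma Feasible.absorb_artificial_noise {K : Type*} [Fintype K] {C P : I → ℝ}
    {R : K → Matrix (Σ i, Fin (n i)) (Σ i, Fin (n i)) ℂ} (h : Feasible C P R Ω Φ) :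
    Feasible C P R (Ω + Φ) 0 := by
  obtain ⟨hR, hΩ, hΦ, hdiag, hfronthaul, hpower⟩ := h
  refine ⟨hR, hΩ.add_posSemidef hΦ, PosSemidef.zero, fun _ _ _ => rfl, fun S hS => ?_, fun i => ?_⟩
  · exact (gS_add_le (posSemidef_sum _ fun k _ => hR k) hΩ hΦ hdiag S).trans (hfronthaul S hS)
  · have hblk : blk (Ω + Φ) i = blk Ω i + blk Φ i := rfl
    have hblk_zero : blk (0 : Matrix (Σ i, Fin (n i)) (Σ i, Fin (n i)) ℂ) i = 0 := rfl
    rw [hblk, hblk_zero, trace_add, trace_zero, Complex.add_re, Complex.zero_re, add_zero,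
      ← add_assoc]
    exact hpower i

end Fronthaul

theorem corollary_sup_over_feasible_with_zero_artificial_noise_general
    {I : Type*} [Fintype I] [DecidableEq I] {n : I → ℕ} {K : Type*} [Fintype K] {α : Type*}
    (C P : I → ℝ)
    (objective : (K → Matrix (Σ i, Fin (n i)) (Σ i, Fin (n i)) ℂ) →
      Matrix (Σ i, Fin (n i)) (Σ i, Fin (n i)) ℂ → α) :
    {v : α | ∃ (R : K → Matrix (Σ i, Fin (n i)) (Σ i, Fin (n i)) ℂ)
        (Ω Φ : Matrix (Σ i, Fin (n i)) (Σ i, Fin (n i)) ℂ),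
        Feasible C P R Ω Φ ∧ v = objective R (Ω + Φ)}
      = {v : α | ∃ (R : K → Matrix (Σ i, Fin (n i)) (Σ i, Fin (n i)) ℂ)
        (Ω : Matrix (Σ i, Fin (n i)) (Σ i, Fin (n i)) ℂ),
        Feasible C P R Ω 0 ∧ v = objective R (Ω + 0)} := by
  ext v
  constructor
  · rintro ⟨R, Ω, Φ, hfeasible, rfl⟩
    exact ⟨R, Ω + Φ, hfeasible.absorb_artificial_noise, by rw [add_zero]⟩
  · rintro ⟨R, Ω, hfeasible, rfl⟩
    exact ⟨R, Ω, 0, hfeasible, rfl⟩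

theorem corollary_sup_over_feasible_with_zero_artificial_noise
    {I : Type*} [Fintype I] [DecidableEq I] {n : I → ℕ}
    {K : Type*} [Fintype K] [DecidableEq K] {m e : K → ℕ}
    (H : ∀ k : K, Matrix (Fin (m k)) (Σ i, Fin (n i)) ℂ)
    (G : ∀ k : K, Matrix (Fin (e k)) (Σ i, Fin (n i)) ℂ)
    (Sig : ∀ k : K, Matrix (Fin (m k)) (Fin (m k)) ℂ)
    (Z : ∀ k : K, Matrix (Fin (e k)) (Fin (e k)) ℂ)
    (hSig : ∀ k, (Sig k).PosDef) (hZ : ∀ k, (Z k).PosDef)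
    (C P : I → ℝ) (hC : ∀ i, 0 ≤ C i) (hP : ∀ i, 0 ≤ P i)
    (w : K → ℝ) (hw : ∀ k, 0 ≤ w k) :
    sSup {v : ℝ | ∃ (R : K → Matrix (Σ i, Fin (n i)) (Σ i, Fin (n i)) ℂ)
        (Ω Φ : Matrix (Σ i, Fin (n i)) (Σ i, Fin (n i)) ℂ),
        Feasible C P R Ω Φ ∧ v = ∑ k, w k * max (fk H G Sig Z k R (Ω + Φ)) 0}
      = sSup {v : ℝ | ∃ (R : K → Matrix (Σ i, Fin (n i)) (Σ i, Fin (n i)) ℂ)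
        (Ω : Matrix (Σ i, Fin (n i)) (Σ i, Fin (n i)) ℂ),
        Feasible C P R Ω 0 ∧ v = ∑ k, w k * max (fk H G Sig Z k R (Ω + 0)) 0} := by
  exact congrArg sSup (corollary_sup_over_feasible_with_zero_artificial_noise_general C P
    fun R Θ => ∑ k, w k * max (fk H G Sig Z k R Θ) 0)
end

section
/- Monotonicity of the fronthaul rate function under added block-diagonal noise: for every Hermitian positive semidefinite R indexed by J, every Hermitian positive definite Ω indexed by J, every block-diagonal Hermitian positive semidefinite Φ indexed by J, and every nonempty S ⊆ I, one has g_S(R, Ω + Φ) ≤ g_S(R, Ω). In other words, adding independent per-block (artificial) noise to the quantization noise covariance can only decrease the required fronthaul rate. -/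
open Matrix BigOperators Finset ComplexOrder

/-!
Log-determinant is concave, so added noise raises `log det` more where the covariance is smaller.
For noise `N` on a single block `i ∈ S`, with `E` the inclusion of that block and `A = Ω_S`,
the determinant lemma turns the increment of `log det A` into an increasing function of the
compressed inverse `Eᴴ * A⁻¹ * E`, and the increment of `log det ((R + Ω)_ii)` into the same
function of `((R + Ω)_ii)⁻¹`. Since `Eᴴ * A * E = Ω_ii ≤ (R + Ω)_ii` and `E` is an isometry,
`((R + Ω)_ii)⁻¹ ≤ Eᴴ * A⁻¹ * E`. General block-diagonal noise is added one block at a time.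
-/

section Loewner

open scoped MatrixOrder

lemma conjTranspose_mul_mul_mono {𝕜 p q : Type*} [RCLike 𝕜] [Fintype p] [Finite q]
    {A B : Matrix p p 𝕜} (E : Matrix p q 𝕜) (hAB : A ≤ B) : Eᴴ * A * E ≤ Eᴴ * B * E := by
  rw [Matrix.le_iff, ← Matrix.sub_mul, ← Matrix.mul_sub]
  exact (Matrix.le_iff.mp hAB).conjTranspose_mul_mul_same E

variable {𝕜 p q : Type*} [RCLike 𝕜] [Fintype p] [DecidableEq p] [Fintype q] [DecidableEq q]

-- By Schur complements, both sides say that `fromBlocks A⁻¹ E Eᴴ C` is positive semidefinite.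
lemma conjTranspose_mul_mul_le_iff_mul_inv_mul_le_inv {A : Matrix p p 𝕜} {C : Matrix q q 𝕜}
    (hA : A.PosDef) (hC : C.PosDef) (E : Matrix p q 𝕜) :
    Eᴴ * A * E ≤ C ↔ E * C⁻¹ * Eᴴ ≤ A⁻¹ := by
  let := hA.inv.isUnit.invertible
  let := hC.isUnit.invertible
  rw [Matrix.le_iff, Matrix.le_iff, ← hC.fromBlocks₂₂ A⁻¹ E, hA.inv.fromBlocks₁₁ E C,
    nonsing_inv_nonsing_inv A hA.det_pos.ne'.isUnit]

lemma inv_le_conjTranspose_mul_inv_mul {A : Matrix p p 𝕜} {C : Matrix q q 𝕜} {E : Matrix p q 𝕜}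
    (hA : A.PosDef) (hC : C.PosDef) (hE : Eᴴ * E = 1) (hAC : Eᴴ * A * E ≤ C) :
    C⁻¹ ≤ Eᴴ * A⁻¹ * E := by
  have hdual : E * C⁻¹ * Eᴴ ≤ A⁻¹ :=
    (conjTranspose_mul_mul_le_iff_mul_inv_mul_le_inv hA hC E).mp hAC
  calc C⁻¹ = (Eᴴ * E) * C⁻¹ * (Eᴴ * E) := by rw [hE, Matrix.one_mul, Matrix.mul_one]
    _ = Eᴴ * (E * C⁻¹ * Eᴴ) * E := by simp only [Matrix.mul_assoc]
    _ ≤ Eᴴ * A⁻¹ * E := conjTranspose_mul_mul_mono E hdual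

lemma one_le_det_of_one_le {A : Matrix p p 𝕜} (hA : 1 ≤ A) : 1 ≤ A.det := by
  have hpsd : A.PosSemidef := (zero_le_one.trans hA).posSemidef
  have hspec : ∀ x ∈ spectrum ℝ A, 1 ≤ x := (CFC.one_le_iff A hpsd.isHermitian).mp hA
  rw [hpsd.isHermitian.det_eq_prod_eigenvalues]
  refine Finset.one_le_prod fun i _ ↦ ?_
  exact_mod_cast hspec _ (hpsd.isHermitian.eigenvalues_mem_spectrum_real i)

lemma det_le_det {A B : Matrix p p 𝕜} (hA : A.PosDef) (hAB : A ≤ B) : A.det ≤ B.det := by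
  obtain ⟨G, hG⟩ := CStarAlgebra.nonneg_iff_eq_mul_star_self.mp (sub_nonneg.mpr hAB)
  have hone : 1 ≤ 1 + Gᴴ * A⁻¹ * G :=
    le_add_of_nonneg_right (hA.inv.posSemidef.conjTranspose_mul_mul_same G).nonneg
  calc A.det ≤ A.det * (1 + Gᴴ * A⁻¹ * G).det :=
        le_mul_of_one_le_right hA.det_pos.le (one_le_det_of_one_le hone)
    _ = (A + G * Gᴴ).det := (det_add_mul G Gᴴ hA.det_pos.ne'.isUnit).symm
    _ = B.det := by rw [← star_eq_conjTranspose, ← hG, add_sub_cancel]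

lemma det_add_mul_det_le {A : Matrix p p 𝕜} {C N : Matrix q q 𝕜} {E : Matrix p q 𝕜}
    (hA : A.PosDef) (hC : C.PosDef) (hN : N.PosSemidef) (hE : Eᴴ * E = 1)
    (hAC : Eᴴ * A * E ≤ C) :
    (C + N).det * A.det ≤ (A + E * N * Eᴴ).det * C.det := by
  obtain ⟨G, rfl⟩ := CStarAlgebra.nonneg_iff_eq_mul_star_self.mp hN.nonneg
  rw [star_eq_conjTranspose]
  have hdetC : (C + G * Gᴴ).det = C.det * (1 + Gᴴ * C⁻¹ * G).det :=
    det_add_mul G Gᴴ hC.det_pos.ne'.isUnit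
  have hdetA : (A + E * (G * Gᴴ) * Eᴴ).det =
      A.det * (1 + Gᴴ * (Eᴴ * A⁻¹ * E) * G).det := by
    have h := det_add_mul (E * G) (E * G)ᴴ hA.det_pos.ne'.isUnit
    simpa only [conjTranspose_mul, Matrix.mul_assoc] using h
  have hpos : (1 + Gᴴ * C⁻¹ * G).PosDef :=
    PosDef.one.add_posSemidef (hC.inv.posSemidef.conjTranspose_mul_mul_same G)
  have hmono : (1 + Gᴴ * C⁻¹ * G).det ≤ (1 + Gᴴ * (Eᴴ * A⁻¹ * E) * G).det :=
    det_le_det hpos <| add_le_add_right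
      (conjTranspose_mul_mul_mono G (inv_le_conjTranspose_mul_inv_mul hA hC hE hAC)) 1
  calc (C + G * Gᴴ).det * A.det = A.det * C.det * (1 + Gᴴ * C⁻¹ * G).det := by
        rw [hdetC]; ring
    _ ≤ A.det * C.det * (1 + Gᴴ * (Eᴴ * A⁻¹ * E) * G).det :=
        mul_le_mul_of_nonneg_left hmono (mul_nonneg hA.det_pos.le hC.det_pos.le)
    _ = (A + E * (G * Gᴴ) * Eᴴ).det * C.det := by rw [hdetA]; ring

end Loewner

section LogDet

open scoped MatrixOrder

variable {p q : Type*} [Fintype p] [DecidableEq p] [Fintype q] [DecidableEq q]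

lemma ofReal_exp_logDet {A : Matrix p p ℂ} (hA : A.PosDef) :
    (Real.exp (logDet A) : ℂ) = A.det := by
  obtain ⟨hre, him⟩ := Complex.pos_iff.mp hA.det_pos
  rw [logDet, Real.exp_log hre]
  exact Complex.ext rfl him

lemma logDet_add_sub_logDet_le {A : Matrix p p ℂ} {C N : Matrix q q ℂ} {E : Matrix p q ℂ}
    (hA : A.PosDef) (hC : C.PosDef) (hN : N.PosSemidef) (hE : Eᴴ * E = 1)
    (hAC : Eᴴ * A * E ≤ C) :
    logDet (C + N) - logDet C ≤ logDet (A + E * N * Eᴴ) - logDet A := by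
  have hdet := det_add_mul_det_le hA hC hN hE hAC
  rw [← ofReal_exp_logDet hA, ← ofReal_exp_logDet hC,
    ← ofReal_exp_logDet (hC.add_posSemidef hN),
    ← ofReal_exp_logDet (hA.add_posSemidef (hN.mul_mul_conjTranspose_same E))] at hdet
  norm_cast at hdet
  rw [← Real.exp_add, ← Real.exp_add, Real.exp_le_exp] at hdet
  linarith

end LogDet

section Blocks

variable {I : Type*} {n : I → ℕ}

lemma blk_add (M N : Matrix (Σ i, Fin (n i)) (Σ i, Fin (n i)) ℂ) (i : I) :
    blk (M + N) i = blk M i + blk N i :=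
  rfl

variable [DecidableEq I]

lemma psub_add (M N : Matrix (Σ i, Fin (n i)) (Σ i, Fin (n i)) ℂ) (S : Finset I) :
    psub (M + N) S = psub M S + psub N S :=
  rfl

lemma blk_blockDiagonal' (Ψ : ∀ i, Matrix (Fin (n i)) (Fin (n i)) ℂ) (i : I) :
    blk (blockDiagonal' Ψ) i = Ψ i :=
  congrFun (blockDiag'_blockDiagonal' Ψ) i

lemma IsBlockDiag.blockDiagonal'_blk {Φ : Matrix (Σ i, Fin (n i)) (Σ i, Fin (n i)) ℂ}
    (hΦ : IsBlockDiag Φ) : blockDiagonal' (blk Φ) = Φ := by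
  ext ⟨i, a⟩ ⟨j, b⟩
  by_cases hij : i = j
  · subst hij
    rw [blockDiagonal'_apply_eq, blk, submatrix_apply]
  · rw [blockDiagonal'_apply, dif_neg hij, hΦ ⟨i, a⟩ ⟨j, b⟩ hij]

lemma sum_blockDiagonal'_single [Fintype I] {l m : I → Type*} {α : Type*} [AddCommMonoid α]
    (Ψ : ∀ i, Matrix (l i) (m i) α) :
    ∑ i, blockDiagonal' (Pi.single i (Ψ i)) = blockDiagonal' Ψ := by
  have h := map_sum (blockDiagonal'AddMonoidHom l m α) (fun i ↦ Pi.single i (Ψ i)) Finset.univ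
  rw [Finset.univ_sum_single] at h
  exact h.symm

lemma posDef_blk_add {R Ω : Matrix (Σ i, Fin (n i)) (Σ i, Fin (n i)) ℂ} {S : Finset I} {i : I}
    (hi : i ∈ S) (hR : (blk R i).PosSemidef) (hΩ : (psub Ω S).PosDef) :
    (blk (R + Ω) i).PosDef :=
  PosDef.posSemidef_add hR
    (hΩ.submatrix (e := fun a ↦ ⟨⟨i, a⟩, hi⟩) fun a b hab ↦ by simpa using hab)

/-- The coordinate inclusion of block `i` into the blocks of `S`, as a 0-1 matrix; it is `0` when
`i ∉ S`. -/
def blockInclusion (n : I → ℕ) (S : Finset I) (i : I) :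
    Matrix {j : Σ i, Fin (n i) // j.1 ∈ S} (Fin (n i)) ℂ :=
  (1 : Matrix (Σ i, Fin (n i)) (Σ i, Fin (n i)) ℂ).submatrix Subtype.val (fun a ↦ ⟨i, a⟩)

lemma psub_blockDiagonal'_single (S : Finset I) (i : I) (N : Matrix (Fin (n i)) (Fin (n i)) ℂ) :
    psub (blockDiagonal' (Pi.single i N)) S =
      blockInclusion n S i * N * (blockInclusion n S i)ᴴ := by
  ext ⟨⟨j, a⟩, hj⟩ ⟨⟨k, b⟩, hk⟩
  by_cases hji : j = i
  · subst hji
    by_cases hjk : j = k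
    · subst hjk
      simp [psub, blockInclusion, mul_apply, one_apply, blockDiagonal'_apply_eq]
    · simp [psub, blockInclusion, mul_apply, one_apply, blockDiagonal'_apply_ne, hjk]
  · simp [psub, blockInclusion, mul_apply, one_apply, blockDiagonal'_apply, hji]

lemma psub_blockDiagonal'_single_of_notMem {S : Finset I} {i : I} (hi : i ∉ S)
    (N : Matrix (Fin (n i)) (Fin (n i)) ℂ) : psub (blockDiagonal' (Pi.single i N)) S = 0 := by
  ext ⟨⟨j, a⟩, hj⟩ k
  have hji : j ≠ i := ne_of_mem_of_not_mem hj hi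
  simp [psub, blockDiagonal'_apply, hji]

lemma posSemidef_psub_blockDiagonal'_single [Finite I] {S : Finset I} {i : I}
    {N : Matrix (Fin (n i)) (Fin (n i)) ℂ} (hN : i ∈ S → N.PosSemidef) :
    (psub (blockDiagonal' (Pi.single i N)) S).PosSemidef := by
  by_cases hi : i ∈ S
  · rw [psub_blockDiagonal'_single]
    exact (hN hi).mul_mul_conjTranspose_same _
  · rw [psub_blockDiagonal'_single_of_notMem hi]
    exact PosSemidef.zero

lemma conjTranspose_blockInclusion_mul_psub_mul [Fintype I] {S : Finset I} {i : I} (hi : i ∈ S)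
    (M : Matrix (Σ i, Fin (n i)) (Σ i, Fin (n i)) ℂ) :
    (blockInclusion n S i)ᴴ * psub M S * blockInclusion n S i = blk M i := by
  let e : Fin (n i) → {j : Σ i, Fin (n i) // j.1 ∈ S} := fun a ↦ ⟨⟨i, a⟩, hi⟩
  have hE : blockInclusion n S i = (1 : Matrix _ _ ℂ).submatrix id e := by
    ext j a
    simp [blockInclusion, e, one_apply, Subtype.ext_iff]
  ext a b
  simp [hE, mul_apply, one_apply, blk, psub, e]

lemma conjTranspose_blockInclusion_mul_self [Fintype I] {S : Finset I} {i : I} (hi : i ∈ S) :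
    (blockInclusion n S i)ᴴ * blockInclusion n S i = 1 := by
  have h := conjTranspose_blockInclusion_mul_psub_mul hi (1 : Matrix (Σ i, Fin (n i)) _ ℂ)
  rwa [psub, submatrix_one _ Subtype.val_injective, Matrix.mul_one, blk,
    submatrix_one _ sigma_mk_injective] at h

end Blocks

section FronthaulRate

open scoped MatrixOrder

variable {I : Type*} [Fintype I] [DecidableEq I] {n : I → ℕ}
  {R Ω : Matrix (Σ i, Fin (n i)) (Σ i, Fin (n i)) ℂ} {S : Finset I} {i : I}

lemma gS_add_blockDiagonal'_single_le_of_mem {N : Matrix (Fin (n i)) (Fin (n i)) ℂ} (hi : i ∈ S)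
    (hR : (blk R i).PosSemidef) (hΩ : (psub Ω S).PosDef) (hN : N.PosSemidef) :
    gS S R (Ω + blockDiagonal' (Pi.single i N)) ≤ gS S R Ω := by
  have hblk : ∑ j ∈ S, (logDet (blk (R + (Ω + blockDiagonal' (Pi.single i N))) j) -
      logDet (blk (R + Ω) j)) = logDet (blk (R + Ω) i + N) - logDet (blk (R + Ω) i) := by
    rw [Finset.sum_eq_single_of_mem i hi fun j _ hji ↦ ?_, ← add_assoc, blk_add _ _ i,
      blk_blockDiagonal', Pi.single_eq_same]
    rw [← add_assoc, blk_add _ _ j, blk_blockDiagonal', Pi.single_eq_of_ne hji, add_zero, sub_self]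
  have hcompress : (blockInclusion n S i)ᴴ * psub Ω S * blockInclusion n S i ≤ blk (R + Ω) i := by
    rw [conjTranspose_blockInclusion_mul_psub_mul hi, blk_add]
    exact le_add_of_nonneg_left hR.nonneg
  have hinc := logDet_add_sub_logDet_le hΩ (posDef_blk_add hi hR hΩ) hN
    (conjTranspose_blockInclusion_mul_self hi) hcompress
  rw [← hblk, ← psub_blockDiagonal'_single, ← psub_add, Finset.sum_sub_distrib] at hinc
  rw [gS, gS]
  linarith

lemma gS_add_blockDiagonal'_single_eq_of_notMem (hi : i ∉ S)
    (N : Matrix (Fin (n i)) (Fin (n i)) ℂ) :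
    gS S R (Ω + blockDiagonal' (Pi.single i N)) = gS S R Ω := by
  have hblk : ∀ j ∈ S, blk (R + (Ω + blockDiagonal' (Pi.single i N))) j = blk (R + Ω) j := by
    intro j hj
    rw [← add_assoc, blk_add, blk_blockDiagonal', Pi.single_eq_of_ne (ne_of_mem_of_not_mem hj hi),
      add_zero]
  have hpsub : psub (Ω + blockDiagonal' (Pi.single i N)) S = psub Ω S := by
    rw [psub_add, psub_blockDiagonal'_single_of_notMem hi, add_zero]
  rw [gS, gS, hpsub, Finset.sum_congr rfl fun j hj ↦ congrArg logDet (hblk j hj)]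

lemma gS_add_blockDiagonal'_single_le {N : Matrix (Fin (n i)) (Fin (n i)) ℂ}
    (hR : i ∈ S → (blk R i).PosSemidef) (hΩ : (psub Ω S).PosDef) (hN : i ∈ S → N.PosSemidef) :
    gS S R (Ω + blockDiagonal' (Pi.single i N)) ≤ gS S R Ω := by
  by_cases hi : i ∈ S
  · exact gS_add_blockDiagonal'_single_le_of_mem hi (hR hi) hΩ (hN hi)
  · exact (gS_add_blockDiagonal'_single_eq_of_notMem hi N).le

lemma gS_add_sum_le {ι : Type*} {T : Finset ι}
    {Ψ : ι → Matrix (Σ i, Fin (n i)) (Σ i, Fin (n i)) ℂ} (hΩ : (psub Ω S).PosDef)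
    (hΨ : ∀ k ∈ T, (psub (Ψ k) S).PosSemidef)
    (hle : ∀ k ∈ T, ∀ Ω', (psub Ω' S).PosDef → gS S R (Ω' + Ψ k) ≤ gS S R Ω') :
    gS S R (Ω + ∑ k ∈ T, Ψ k) ≤ gS S R Ω := by
  classical
  induction T using Finset.induction_on generalizing Ω with
  | empty => rw [Finset.sum_empty, add_zero]
  | insert k T hk ih =>
    rw [Finset.forall_mem_insert] at hΨ hle
    rw [Finset.sum_insert hk, ← add_assoc]
    have hpos : (psub (Ω + Ψ k) S).PosDef := hΩ.add_posSemidef hΨ.1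
    exact (ih hpos hΨ.2 hle.2).trans (hle.1 Ω hΩ)

theorem gS_anti_in_blockdiag_noise_general {Φ : Matrix (Σ i, Fin (n i)) (Σ i, Fin (n i)) ℂ}
    (hR : ∀ i ∈ S, (blk R i).PosSemidef) (hΩ : (psub Ω S).PosDef)
    (hΦ : ∀ i ∈ S, (blk Φ i).PosSemidef) (hΦbd : IsBlockDiag Φ) :
    gS S R (Ω + Φ) ≤ gS S R Ω := by
  rw [← hΦbd.blockDiagonal'_blk, ← sum_blockDiagonal'_single]
  exact gS_add_sum_le hΩ (fun i _ ↦ posSemidef_psub_blockDiagonal'_single (hΦ i))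
    fun i _ _ hΩ' ↦ gS_add_blockDiagonal'_single_le (hR i) hΩ' (hΦ i)

end FronthaulRate

theorem gS_anti_in_blockdiag_noise
    {I : Type*} [Fintype I] [DecidableEq I] {n : I → ℕ}
    (R Ω Φ : Matrix (Σ i, Fin (n i)) (Σ i, Fin (n i)) ℂ)
    (hR : R.PosSemidef) (hΩ : Ω.PosDef) (hΦ : Φ.PosSemidef) (hΦbd : IsBlockDiag Φ)
    (S : Finset I) (hS : S.Nonempty) :
    gS S R (Ω + Φ) ≤ gS S R Ω :=
  gS_anti_in_blockdiag_noise_general (fun _ _ ↦ hR.submatrix _)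
    (hΩ.submatrix Subtype.val_injective) (fun _ _ ↦ hΦ.submatrix _) hΦbd
end
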